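/- arXiv:2106.04061 — 2 statements merged into one kernel-verified Lean document; each statement's English description precedes it below -/
import Mathlib

section
/- Suppose D_n(𝒞) ≠ 0 for every 1 ≤ n ≤ d. Then for each 1 ≤ n ≤ d the product R_n···R_1 is invertible, so the matrix H_n(𝒞) is well-defined; H_n(𝒞) is a real symmetric 2×2 matrix with determinant 1; and there exists a positive definite real symmetric 2×2 matrix H̃_n such that H_n(𝒞) = (1/(D_{n-1}(𝒞)·D_n(𝒞)))·H̃_n. In particular, H_n(𝒞) is positive definite if and only if D_{n-1}(𝒞)·D_n(𝒞) > 0. -/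
/-!
Flipping the sign of the lower half of `z_n^-` turns both linear systems into a single equation
`L_n^+ X = B` with two columns on each side. The determinant of the two outer rows of `X` (positions
`1` and `2n`) is `-2 det R_n`, and `B` is supported on the inner rows `n` and `n + 1`. Comparing
determinants as in Cramer's rule, and using that the outer rows of `L_n^+` vanish on the middle
columns while the middle block is `L_{n-2}^+`, gives `D_n det R_n = 4 |C_L|^4 D_{n-2}` for `n ≥ 2`,
and directly `D_1 det R_1 = -4 |C_L|^2`. By induction `det (R_n ⋯ R_1) * D_{n-1} * D_n < 0`.

For an invertible real `2 × 2` matrix `P` and the rotation `J = [[0, -1], [1, 0]]` one has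
`P J Pᵀ = det P • J`, so `P = R_n ⋯ R_1` gives `H_n = -(det P)⁻¹ Pᵀ P`: a definite matrix whose sign
is that of `D_{n-1} D_n`.
-/

open Complex Matrix
open scoped ComplexOrder

noncomputable section

/-- `L` from the pair `(L,r) = (d/2,1)` if `d` is even, `(d,2)` if `d` is odd. -/
def Lv (d : ℕ) : ℤ := if Even d then d / 2 else d

/-- `r` from the pair `(L,r) = (d/2,1)` if `d` is even, `(d,2)` if `d` is odd. -/
def rv (d : ℕ) : ℤ := if Even d then 1 else 2

/-- The coefficient sequence of `f_𝒞(T) = Σ_{j=0}^d C_{-(L-rj)} T^{d-j}`: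
the coefficient of `T^k` is `C_{L-rk}`. -/
def coeffC (d : ℕ) (C : ℤ → ℂ) : ℕ → ℂ := fun k => C (Lv d - rv d * k)

/-- The `n × n` upper-triangular matrix `M_n(f)`. -/
def SCM (a : ℕ → ℂ) (d n : ℕ) : Matrix (Fin n) (Fin n) ℂ :=
  Matrix.of fun j k => if (j : ℕ) ≤ (k : ℕ) then a (d - ((k : ℕ) - (j : ℕ))) else 0

/-- The `n × n` upper-triangular matrix `N_n(f)`. -/
def SCN (a : ℕ → ℂ) (n : ℕ) : Matrix (Fin n) (Fin n) ℂ :=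
  Matrix.of fun j k => if (j : ℕ) ≤ (k : ℕ) then a ((k : ℕ) - (j : ℕ)) else 0

/-- `L_n^ε(f)`, with `ε = 1` for `L_n^+` and `ε = -1` for `L_n^-`. -/
def SCL (a : ℕ → ℂ) (d n : ℕ) (ε : ℂ) : Matrix (Fin n ⊕ Fin n) (Fin n ⊕ Fin n) ℂ :=
  Matrix.fromBlocks (SCM a d n)ᵀ (ε • (SCN a n)ᴴ) (ε • SCN a n)
    ((SCM a d n).map (starRingEnd ℂ))

/-- The Schur–Cohn determinant `D_n(𝒞)`, with `D_0(𝒞) = 1`. -/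
def SCD (d : ℕ) (C : ℤ → ℂ) (n : ℕ) : ℂ :=
  if n = 0 then 1 else (SCL (coeffC d C) d n 1).det

/-- The vector `ᵗ(z(1), ..., z(n), conj(z(n)), ..., conj(z(1)))` of length `2n`. -/
def symVec (n : ℕ) (z : ℕ → ℂ) : Fin n ⊕ Fin n → ℂ :=
  Sum.elim (fun i => z (i : ℕ)) (fun i => (starRingEnd ℂ) (z ((i : Fin n).rev : ℕ)))

/-- The vector `ᵗ(0, ..., 0, 2·conj(C_L), 2·C_L, 0, ..., 0)` of length `2n`, with the
nonzero entries in positions `n` and `n+1`. -/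
def rhsVec (d n : ℕ) (C : ℤ → ℂ) : Fin n ⊕ Fin n → ℂ :=
  Sum.elim (fun i => if (i : ℕ) + 1 = n then 2 * (starRingEnd ℂ) (C (Lv d)) else 0)
    (fun i => if (i : ℕ) = 0 then 2 * C (Lv d) else 0)

/-- `R_k = [[Re z_k^+(1), Im z_k^+(1)],[−Im z_k^-(1), Re z_k^-(1)]]`, where
`zp k` and `zm k` are the (0-based) solution sequences `z_k^+` and `z_k^-`. -/
def Rmat (zp zm : ℕ → ℕ → ℂ) (k : ℕ) : Matrix (Fin 2) (Fin 2) ℝ :=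
  !![(zp k 0).re, (zp k 0).im; -(zm k 0).im, (zm k 0).re]

/-- The ordered product `R_n · R_{n-1} ⋯ R_1`. -/
def Rprod (zp zm : ℕ → ℕ → ℂ) (n : ℕ) : Matrix (Fin 2) (Fin 2) ℝ :=
  ((List.range n).map (fun i => Rmat zp zm (n - i))).prod

/-- `H_n(𝒞)`, defined (when `R_n ⋯ R_1` is invertible) as the unique matrix with
`(R_n⋯R_1)·[[0,−1],[1,0]]·H_n = [[0,1],[−1,0]]·(R_n⋯R_1)`. -/
def Hmat (zp zm : ℕ → ℕ → ℂ) (n : ℕ) : Matrix (Fin 2) (Fin 2) ℝ :=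
  (!![(0:ℝ), -1; 1, 0])⁻¹ * (Rprod zp zm n)⁻¹ * !![(0:ℝ), 1; -1, 0] * Rprod zp zm n

section CommRing

variable {R α β γ : Type*} [CommRing R] [Fintype α] [DecidableEq α] [Fintype β] [DecidableEq β]
  [Fintype γ] [DecidableEq γ]

lemma det_fromBlocks_zero_one (A D : Matrix α α R) : (fromBlocks 0 A 1 D).det = (-A).det := by
  have hmul : fromBlocks 1 1 0 1 * fromBlocks 0 A (1 : Matrix α α R) D =
      fromBlocks 1 (A + D) 1 D := by
    simp [fromBlocks_multiply]
  have hdet := congrArg Matrix.det hmul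
  rwa [det_mul, det_fromBlocks_zero₂₁, det_fromBlocks_one₁₁, det_one, one_mul, one_mul, one_mul,
    sub_add_cancel_right] at hdet

lemma det_fromBlocks_lower_middle (A : Matrix α α R) (B : Matrix β α R) (C : Matrix β β R)
    (D : Matrix β γ R) (E : Matrix γ α R) (F : Matrix γ γ R) :
    (fromBlocks (fromBlocks A 0 B C) (fromRows 0 D) (fromCols E 0) F).det =
      A.det * C.det * F.det := by
  have hassoc : reindex (Equiv.sumAssoc α β γ) (Equiv.sumAssoc α β γ)
      (fromBlocks (fromBlocks A 0 B C) (fromRows 0 D) (fromCols E 0) F) =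
      fromBlocks A 0 (fromRows B E) (fromBlocks C D 0 F) := by
    ext (_ | _ | _) (_ | _ | _) <;> rfl
  rw [← det_reindex_self (Equiv.sumAssoc α β γ), hassoc, det_fromBlocks_zero₁₂,
    det_fromBlocks_zero₂₁, mul_assoc]

theorem det_mul_det_neg_toRows₁_of_mul_eq_fromRows (L : Matrix ((α ⊕ α) ⊕ γ) ((α ⊕ α) ⊕ γ) R)
    (X : Matrix ((α ⊕ α) ⊕ γ) α R) (r : Matrix α α R)
    (hL : L.toBlocks₁₂.toRows₁ = 0) (hX : L * X = fromRows (fromRows 0 r) 0) :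
    L.det * (-X.toRows₁.toRows₁).det =
      L.toBlocks₁₁.toBlocks₁₂.det * r.det * L.toBlocks₂₂.det := by
  -- Compare determinants in `L * Y`, where `Y` has `X` in its second block column and the
  -- remaining columns are those of `1` chosen so that `L * Y` is block triangular.
  let P : Matrix ((α ⊕ α) ⊕ γ) α R := fromRows (fromRows 0 1) 0
  let Q : Matrix ((α ⊕ α) ⊕ γ) γ R := fromRows 0 1
  have hY : fromCols (fromCols P X) Q =
      fromBlocks (fromBlocks 0 X.toRows₁.toRows₁ 1 X.toRows₁.toRows₂) 0
        (fromCols 0 X.toRows₂) 1 := by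
    ext ((_ | _) | _) ((_ | _) | _) <;> rfl
  have hLY : L * fromCols (fromCols P X) Q =
      fromBlocks (fromBlocks L.toBlocks₁₁.toBlocks₁₂ 0 L.toBlocks₁₁.toBlocks₂₂ r)
        (fromRows 0 L.toBlocks₁₂.toRows₂) (fromCols L.toBlocks₂₁.toCols₂ 0) L.toBlocks₂₂ := by
    have hL' (i : α) (k : γ) : L (.inl (.inl i)) (.inr k) = 0 := congrFun₂ hL i k
    rw [mul_fromCols, mul_fromCols, hX]
    ext ((_ | _) | _) ((_ | _) | _) <;>
      simp [P, Q, mul_apply, one_apply, hL', toBlocks₁₁, toBlocks₁₂, toBlocks₂₁, toBlocks₂₂]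
  have hdet := congrArg Matrix.det hLY
  rwa [det_mul, hY, det_fromBlocks_zero₁₂, det_fromBlocks_zero_one, det_one, mul_one,
    det_fromBlocks_lower_middle] at hdet

lemma mul_rotation_mul_transpose (P : Matrix (Fin 2) (Fin 2) R) :
    P * !![0, -1; 1, 0] * Pᵀ = P.det • !![0, -1; 1, 0] := by
  rw [Pᵀ.eta_fin_two, P.eta_fin_two, mul_fin_two, mul_fin_two, det_fin_two_of]
  ext i j
  fin_cases i <;> fin_cases j <;> simp [mul_comm, ← sub_eq_add_neg]

lemma mul_mul_eq_iff_eq_inv_mul {P J : Matrix α α R} (hP : IsUnit P) (hJ : IsUnit J)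
    (K H : Matrix α α R) : P * J * H = K * P ↔ H = J⁻¹ * P⁻¹ * K * P := by
  have hPJ : Invertible (P * J) := (hP.mul hJ).invertible
  rw [← Matrix.mul_inv_rev, Matrix.mul_assoc _ K, eq_comm (a := H),
    inv_mul_eq_iff_eq_mul_of_invertible, eq_comm]

end CommRing

section PosDef

variable {ι : Type*}

lemma posDef_transpose_mul_self [Fintype ι] [DecidableEq ι] {P : Matrix ι ι ℝ}
    (hP : IsUnit P) : (Pᵀ * P).PosDef := by
  rw [← conjTranspose_eq_transpose_of_trivial]
  exact PosDef.conjTranspose_mul_self P (mulVec_injective_iff_isUnit.mpr hP)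

lemma posDef_smul_iff [Nonempty ι] {A : Matrix ι ι ℝ} (hA : A.PosDef) {c : ℝ} :
    (c • A).PosDef ↔ 0 < c := by
  refine ⟨fun h => ?_, fun hc => hA.smul hc⟩
  obtain ⟨i⟩ := ‹Nonempty ι›
  exact pos_of_mul_pos_left h.diag_pos (hA.diag_pos (i := i)).le

end PosDef

section SchurCohn

variable (a : ℕ → ℂ) (d : ℕ)

lemma conj_det_SCL (n : ℕ) (ε : ℂ) :
    (starRingEnd ℂ) (SCL a d n ε).det = (SCL a d n ((starRingEnd ℂ) ε)).det := by
  let e : Fin n ⊕ Fin n ≃ Fin n ⊕ Fin n :=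
    (Equiv.sumComm _ _).trans (Equiv.sumCongr Fin.revPerm Fin.revPerm)
  have hrev (i j : Fin n) : n - ((i : ℕ) + 1) - (n - ((j : ℕ) + 1)) = (j : ℕ) - i := by omega
  have hmap : (starRingEnd ℂ).mapMatrix (SCL a d n ε) =
      (SCL a d n ((starRingEnd ℂ) ε)).submatrix e e := by
    ext (i | i) (j | j) <;> simp [e, SCL, SCM, SCN, hrev, apply_ite (starRingEnd ℂ)]
  rw [RingHom.map_det, hmap, det_submatrix_equiv_self]

lemma SCD_eq_det_SCL (C : ℤ → ℂ) (n : ℕ) : SCD d C n = (SCL (coeffC d C) d n 1).det := by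
  unfold SCD
  split_ifs with hn
  · subst hn
    simp
  · rfl

lemma ofReal_re_SCD (C : ℤ → ℂ) (n : ℕ) : ((SCD d C n).re : ℂ) = SCD d C n := by
  rw [← Complex.conj_eq_iff_re, SCD_eq_det_SCL, conj_det_SCL, map_one]

/-- The `2n × 2` matrix with columns `u` and `v`, the lower half of `v` being negated: this sign
change intertwines `L_n^+` and `L_n^-`, so one matrix equation for `L_n^+` encodes a linear system
for each of them. -/
def signedPair {n : ℕ} (u v : Fin n ⊕ Fin n → ℂ) : Matrix (Fin n ⊕ Fin n) (Fin 2) ℂ :=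
  Matrix.of fun i => ![u i, Sum.elim (v ∘ .inl) (-(v ∘ .inr)) i]

lemma SCL_mul_signedPair {n : ℕ} (ε : ℂ) (u v : Fin n ⊕ Fin n → ℂ) :
    SCL a d n ε * signedPair u v = signedPair (SCL a d n ε *ᵥ u) (SCL a d n (-ε) *ᵥ v) := by
  ext (i | i) j <;> fin_cases j <;>
    simp [signedPair, SCL, mul_apply, mulVec, dotProduct, add_comm]

/-- Positions `1` and `2n` among `1, ..., 2n`, where `n = m + 1`. -/
def outerIndex (m : ℕ) : Fin 2 → Fin (m + 1) ⊕ Fin (m + 1) := ![.inl 0, .inr (Fin.last m)]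

/-- Positions `n` and `n + 1` among `1, ..., 2n`, where `n = m + 1`. -/
def innerIndex (m : ℕ) : Fin 2 → Fin (m + 1) ⊕ Fin (m + 1) := ![.inl (Fin.last m), .inr 0]

lemma bijective_outer_inner_middle (m : ℕ) :
    Function.Bijective (Sum.elim (Sum.elim (outerIndex (m + 1)) (innerIndex (m + 1)))
      (Sum.map (fun i : Fin m => i.castSucc.succ) (fun i : Fin m => i.castSucc.succ))) := by
  rw [Fintype.bijective_iff_surjective_and_card]
  refine ⟨?_, by simp only [Fintype.card_sum, Fintype.card_fin]; ring⟩
  rintro (i | i)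
  · cases i using Fin.cases with
    | zero => exact ⟨.inl (.inl 0), rfl⟩
    | succ i =>
      cases i using Fin.lastCases with
      | last => exact ⟨.inl (.inr 0), rfl⟩
      | cast i => exact ⟨.inr (.inl i), rfl⟩
  · cases i using Fin.cases with
    | zero => exact ⟨.inl (.inr 1), rfl⟩
    | succ i =>
      cases i using Fin.lastCases with
      | last => exact ⟨.inl (.inl 1), rfl⟩
      | cast i => exact ⟨.inr (.inr i), rfl⟩

/-- The positions `1, ..., 2n` split into the outer ones `1, 2n`, the inner ones `n, n + 1` and
the remaining ones, where `n = m + 2`. -/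
def outerInnerMiddle (m : ℕ) :
    (Fin 2 ⊕ Fin 2) ⊕ (Fin m ⊕ Fin m) ≃ Fin (m + 2) ⊕ Fin (m + 2) :=
  Equiv.ofBijective _ (bijective_outer_inner_middle m)

lemma SCL_submatrix_middle (m : ℕ) (ε : ℂ) :
    ((SCL a d (m + 2) ε).submatrix (outerInnerMiddle m) (outerInnerMiddle m)).toBlocks₂₂ =
      SCL a d m ε := by
  ext (i | i) (j | j) <;> simp [outerInnerMiddle, toBlocks₂₂, SCL, SCM, SCN]

lemma SCL_submatrix_outer_middle (m : ℕ) (ε : ℂ) :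
    ((SCL a d (m + 2) ε).submatrix (outerInnerMiddle m) (outerInnerMiddle m)).toBlocks₁₂.toRows₁ =
      0 := by
  ext i (j | j) <;> fin_cases i <;>
    simp [outerInnerMiddle, outerIndex, toBlocks₁₂, SCL, SCM, SCN]

lemma SCL_submatrix_outer_inner (m : ℕ) (ε : ℂ) :
    (SCL a d (m + 2) ε).submatrix (outerIndex (m + 1)) (innerIndex (m + 1)) =
      !![0, ε * (starRingEnd ℂ) (a 0); ε * a 0, 0] := by
  ext i j
  fin_cases i <;> fin_cases j <;> simp [outerIndex, innerIndex, SCL, SCM, SCN]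

lemma signedPair_symVec_submatrix_outer (m : ℕ) (z w : ℕ → ℂ) :
    (signedPair (symVec (m + 1) z) (symVec (m + 1) w)).submatrix (outerIndex m) id =
      !![z 0, w 0; (starRingEnd ℂ) (z 0), -(starRingEnd ℂ) (w 0)] := by
  ext i j
  fin_cases i <;> fin_cases j <;> simp [signedPair, symVec, outerIndex]

lemma signedPair_rhsVec_submatrix_inner (C : ℤ → ℂ) (m : ℕ) :
    (signedPair (-rhsVec d (m + 1) C) (rhsVec d (m + 1) C)).submatrix (innerIndex m) id =
      !![-(2 * (starRingEnd ℂ) (C (Lv d))), 2 * (starRingEnd ℂ) (C (Lv d));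
        -(2 * C (Lv d)), -(2 * C (Lv d))] := by
  ext i j
  fin_cases i <;> fin_cases j <;> simp [signedPair, rhsVec, innerIndex]

lemma det_signedPair_symVec_outer (zp zm : ℕ → ℕ → ℂ) (m : ℕ) :
    ((signedPair (symVec (m + 1) (zp (m + 1)))
      (symVec (m + 1) (zm (m + 1)))).submatrix (outerIndex m) id).det =
      -2 * ((Rmat zp zm (m + 1)).det : ℂ) := by
  set z := zp (m + 1) 0
  set w := zm (m + 1) 0
  have hre : (Rmat zp zm (m + 1)).det = (z * (starRingEnd ℂ) w).re := by
    simp [Rmat, det_fin_two_of, z, w]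
  have hconj := Complex.add_conj (z * (starRingEnd ℂ) w)
  rw [map_mul, Complex.conj_conj] at hconj
  push_cast at hconj
  rw [signedPair_symVec_submatrix_outer, det_fin_two_of, hre]
  linear_combination -hconj

lemma det_signedPair_rhsVec_inner (C : ℤ → ℂ) (m : ℕ) :
    ((signedPair (-rhsVec d (m + 1) C) (rhsVec d (m + 1) C)).submatrix (innerIndex m) id).det =
      8 * (Complex.normSq (C (Lv d)) : ℂ) := by
  rw [signedPair_rhsVec_submatrix_inner, det_fin_two_of, Complex.normSq_eq_conj_mul_self]
  ring

lemma signedPair_rhsVec_submatrix_outerInnerMiddle (C : ℤ → ℂ) (m : ℕ) :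
    (signedPair (-rhsVec d (m + 2) C) (rhsVec d (m + 2) C)).submatrix (outerInnerMiddle m) id =
      fromRows (fromRows 0 ((signedPair (-rhsVec d (m + 2) C) (rhsVec d (m + 2) C)).submatrix
        (innerIndex (m + 1)) id)) 0 := by
  ext ((i | i) | (i | i)) j
  · fin_cases i <;> fin_cases j <;>
      simp [outerInnerMiddle, outerIndex, signedPair, rhsVec]
  · rfl
  all_goals fin_cases j <;> simp [outerInnerMiddle, signedPair, rhsVec, i.isLt.ne]

variable {d} {C : ℤ → ℂ} {zp zm : ℕ → ℕ → ℂ}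

theorem re_SCD_one_mul_det_Rmat
    (hp : SCL (coeffC d C) d 1 1 *ᵥ symVec 1 (zp 1) = -rhsVec d 1 C)
    (hm : SCL (coeffC d C) d 1 (-1) *ᵥ symVec 1 (zm 1) = rhsVec d 1 C) :
    (SCD d C 1).re * (Rmat zp zm 1).det = -4 * Complex.normSq (C (Lv d)) := by
  let e : Fin 2 ≃ Fin 1 ⊕ Fin 1 := (finSumFinEquiv (m := 1) (n := 1)).symm
  have houter : outerIndex 0 = e := by ext i; fin_cases i <;> rfl
  have hinner : innerIndex 0 = e := by ext i; fin_cases i <;> rfl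
  have hmul := SCL_mul_signedPair (coeffC d C) d 1 (symVec 1 (zp 1)) (symVec 1 (zm 1))
  rw [hp, hm] at hmul
  have hdet := congrArg (fun X => (X.submatrix e id).det) hmul
  simp only [← submatrix_mul_equiv _ _ e e id, det_mul, det_submatrix_equiv_self] at hdet
  rw [← houter, det_signedPair_symVec_outer zp zm 0, houter, ← hinner,
    det_signedPair_rhsVec_inner d C 0, ← SCD_eq_det_SCL, ← ofReal_re_SCD] at hdet
  rw [← Complex.ofReal_inj]
  push_cast
  linear_combination (-1 / 2) * hdet

theorem re_SCD_add_two_mul_det_Rmat {m : ℕ}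
    (hp : SCL (coeffC d C) d (m + 2) 1 *ᵥ symVec (m + 2) (zp (m + 2)) = -rhsVec d (m + 2) C)
    (hm : SCL (coeffC d C) d (m + 2) (-1) *ᵥ symVec (m + 2) (zm (m + 2)) = rhsVec d (m + 2) C) :
    (SCD d C (m + 2)).re * (Rmat zp zm (m + 2)).det =
      4 * Complex.normSq (C (Lv d)) ^ 2 * (SCD d C m).re := by
  let e := outerInnerMiddle m
  let X := signedPair (symVec (m + 2) (zp (m + 2))) (symVec (m + 2) (zm (m + 2)))
  have hmul : (SCL (coeffC d C) d (m + 2) 1).submatrix e e * X.submatrix e id =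
      fromRows (fromRows 0 ((signedPair (-rhsVec d (m + 2) C) (rhsVec d (m + 2) C)).submatrix
        (innerIndex (m + 1)) id)) 0 := by
    rw [submatrix_mul_equiv, SCL_mul_signedPair, hp, hm,
      signedPair_rhsVec_submatrix_outerInnerMiddle]
  have hdet := det_mul_det_neg_toRows₁_of_mul_eq_fromRows _ _ _
    (SCL_submatrix_outer_middle _ _ _ _) hmul
  have hX : (X.submatrix e id).toRows₁.toRows₁ = X.submatrix (outerIndex (m + 1)) id := rfl
  have hL : ((SCL (coeffC d C) d (m + 2) 1).submatrix e e).toBlocks₁₁.toBlocks₁₂ =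
      (SCL (coeffC d C) d (m + 2) 1).submatrix (outerIndex (m + 1)) (innerIndex (m + 1)) := rfl
  have hcoeff : coeffC d C 0 = C (Lv d) := by simp [coeffC]
  rw [hX, hL, det_neg, Fintype.card_fin, neg_one_sq, one_mul, det_submatrix_equiv_self,
    det_signedPair_symVec_outer, SCL_submatrix_outer_inner, det_fin_two_of,
    det_signedPair_rhsVec_inner, SCL_submatrix_middle, ← SCD_eq_det_SCL, ← SCD_eq_det_SCL,
    ← ofReal_re_SCD, ← ofReal_re_SCD d C m, hcoeff] at hdet
  rw [← Complex.ofReal_inj]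
  push_cast
  rw [Complex.normSq_eq_conj_mul_self] at hdet ⊢
  linear_combination (-1 / 2) * hdet

lemma Rprod_succ (zp zm : ℕ → ℕ → ℂ) (n : ℕ) :
    Rprod zp zm (n + 1) = Rmat zp zm (n + 1) * Rprod zp zm n := by
  simp [Rprod, List.range_succ_eq_map, Function.comp_def]

theorem det_Rprod_mul_re_SCD_neg (hC : C (Lv d) ≠ 0) {n : ℕ} (hn : 1 ≤ n)
    (hzp : ∀ k, 1 ≤ k → k ≤ n → SCL (coeffC d C) d k 1 *ᵥ symVec k (zp k) = -rhsVec d k C)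
    (hzm : ∀ k, 1 ≤ k → k ≤ n → SCL (coeffC d C) d k (-1) *ᵥ symVec k (zm k) = rhsVec d k C) :
    (Rprod zp zm n).det * ((SCD d C (n - 1)).re * (SCD d C n).re) < 0 := by
  have hnormSq : 0 < Complex.normSq (C (Lv d)) := Complex.normSq_pos.mpr hC
  induction n, hn using Nat.le_induction with
  | base =>
    have hrec := re_SCD_one_mul_det_Rmat (hzp 1 le_rfl le_rfl) (hzm 1 le_rfl le_rfl)
    calc (Rprod zp zm 1).det * ((SCD d C 0).re * (SCD d C 1).re)
        = (SCD d C 1).re * (Rmat zp zm 1).det := by simp [Rprod, SCD, mul_comm]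
      _ = -(4 * Complex.normSq (C (Lv d))) := by rw [hrec]; ring
      _ < 0 := by simpa using hC
  | succ n hn ih =>
    obtain ⟨m, rfl⟩ := Nat.exists_eq_add_of_le' hn
    have hrec := re_SCD_add_two_mul_det_Rmat (hzp (m + 2) (by omega) le_rfl)
      (hzm (m + 2) (by omega) le_rfl)
    have hprev := ih (fun k hk hkm => hzp k hk (by omega)) (fun k hk hkm => hzm k hk (by omega))
    calc (Rprod zp zm (m + 2)).det * ((SCD d C (m + 1)).re * (SCD d C (m + 2)).re)
        = (SCD d C (m + 2)).re * (Rmat zp zm (m + 2)).det *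
            ((Rprod zp zm (m + 1)).det * (SCD d C (m + 1)).re) := by
          rw [Rprod_succ, det_mul]; ring
      _ = 4 * Complex.normSq (C (Lv d)) ^ 2 *
            ((Rprod zp zm (m + 1)).det * ((SCD d C m).re * (SCD d C (m + 1)).re)) := by
          rw [hrec]; ring
      _ < 0 := mul_neg_of_pos_of_neg (by positivity) hprev

end SchurCohn

section Hmat

variable {zp zm : ℕ → ℕ → ℂ} {n : ℕ}

lemma isUnit_rotation : IsUnit !![(0 : ℝ), -1; 1, 0] := by
  simp [isUnit_iff_isUnit_det]

lemma Rprod_mul_eq_iff_eq_Hmat (hP : IsUnit (Rprod zp zm n)) (H : Matrix (Fin 2) (Fin 2) ℝ) :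
    Rprod zp zm n * !![(0 : ℝ), -1; 1, 0] * H = !![(0 : ℝ), 1; -1, 0] * Rprod zp zm n ↔
      H = Hmat zp zm n :=
  mul_mul_eq_iff_eq_inv_mul hP isUnit_rotation _ H

lemma Hmat_eq_smul_transpose_mul_self (hP : IsUnit (Rprod zp zm n)) :
    Hmat zp zm n = (-(Rprod zp zm n).det⁻¹) • ((Rprod zp zm n)ᵀ * Rprod zp zm n) := by
  have hdet : (Rprod zp zm n).det ≠ 0 := ((isUnit_iff_isUnit_det _).mp hP).ne_zero
  have hneg : !![(0 : ℝ), 1; -1, 0] = -!![(0 : ℝ), -1; 1, 0] := by simp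
  symm
  rw [← Rprod_mul_eq_iff_eq_Hmat hP, Matrix.mul_smul, ← Matrix.mul_assoc,
    mul_rotation_mul_transpose, Matrix.smul_mul, smul_smul, neg_mul, inv_mul_cancel₀ hdet, hneg,
    neg_one_smul, Matrix.neg_mul]

lemma Hmat_isSymm (hP : IsUnit (Rprod zp zm n)) : (Hmat zp zm n).IsSymm := by
  rw [Hmat_eq_smul_transpose_mul_self hP]
  exact (isSymm_transpose_mul_self _).smul _

lemma det_Hmat (hP : IsUnit (Rprod zp zm n)) : (Hmat zp zm n).det = 1 := by
  have hdet : (Rprod zp zm n).det ≠ 0 := ((isUnit_iff_isUnit_det _).mp hP).ne_zero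
  rw [Hmat_eq_smul_transpose_mul_self hP, det_smul, det_mul, det_transpose, Fintype.card_fin]
  field_simp

lemma exists_posDef_Hmat_eq_inv_smul {k : ℝ} (hk : (Rprod zp zm n).det * k < 0) :
    ∃ Ht : Matrix (Fin 2) (Fin 2) ℝ, Ht.PosDef ∧ Hmat zp zm n = k⁻¹ • Ht := by
  have hdet : (Rprod zp zm n).det ≠ 0 := left_ne_zero_of_mul hk.ne
  have hk0 : k ≠ 0 := right_ne_zero_of_mul hk.ne
  have hP : IsUnit (Rprod zp zm n) := (isUnit_iff_isUnit_det _).mpr hdet.isUnit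
  have hpos : 0 < -(Rprod zp zm n).det⁻¹ * k := by
    have hfactor : -(Rprod zp zm n).det⁻¹ * k =
        -((Rprod zp zm n).det * k) * (Rprod zp zm n).det⁻¹ ^ 2 := by field_simp
    rw [hfactor]
    exact mul_pos (neg_pos.mpr hk) (by positivity)
  refine ⟨_, (posDef_transpose_mul_self hP).smul hpos, ?_⟩
  rw [Hmat_eq_smul_transpose_mul_self hP, smul_smul]
  congr 1
  field_simp

end Hmat

/-- Suppose `D_n(𝒞) ≠ 0` for every `1 ≤ n ≤ d`.  Then for each `1 ≤ n ≤ d` the product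
`R_n⋯R_1` is invertible, so that `H_n(𝒞)` is well-defined (it satisfies the defining
relation, uniquely); `H_n(𝒞)` is real symmetric of determinant `1`; there is a positive
definite real symmetric matrix `H̃_n` with `H_n(𝒞) = (1/(D_{n-1}(𝒞)·D_n(𝒞)))·H̃_n`; and
`H_n(𝒞)` is positive definite iff `D_{n-1}(𝒞)·D_n(𝒞) > 0`. -/
theorem Hmat_wellDefined_symm_det_one_posdef
    (d : ℕ) (hd : 0 < d) (C : ℤ → ℂ) (hC : C (Lv d) * C (-(Lv d)) ≠ 0)
    (hD : ∀ n, 1 ≤ n → n ≤ d → SCD d C n ≠ 0)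
    (zp zm : ℕ → ℕ → ℂ)
    (hzp : ∀ n, 1 ≤ n → n ≤ d →
      (SCL (coeffC d C) d n 1).mulVec (symVec n (zp n)) = -(rhsVec d n C))
    (hzm : ∀ n, 1 ≤ n → n ≤ d →
      (SCL (coeffC d C) d n (-1)).mulVec (symVec n (zm n)) = rhsVec d n C) :
    ∀ n, 1 ≤ n → n ≤ d →
      IsUnit (Rprod zp zm n) ∧
      Rprod zp zm n * !![(0:ℝ), -1; 1, 0] * Hmat zp zm n
        = !![(0:ℝ), 1; -1, 0] * Rprod zp zm n ∧
      (∀ H' : Matrix (Fin 2) (Fin 2) ℝ,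
        Rprod zp zm n * !![(0:ℝ), -1; 1, 0] * H' = !![(0:ℝ), 1; -1, 0] * Rprod zp zm n →
        H' = Hmat zp zm n) ∧
      (Hmat zp zm n).IsSymm ∧ (Hmat zp zm n).det = 1 ∧
      (∃ Ht : Matrix (Fin 2) (Fin 2) ℝ, Ht.PosDef ∧ Ht.IsSymm ∧
        ∀ i j, ((Hmat zp zm n i j : ℂ)) = (SCD d C (n - 1) * SCD d C n)⁻¹ * (Ht i j : ℂ)) ∧
      ((Hmat zp zm n).PosDef ↔ 0 < SCD d C (n - 1) * SCD d C n) := by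
  intro n hn hnd
  have hneg := det_Rprod_mul_re_SCD_neg (left_ne_zero_of_mul hC) hn
    (fun k hk hkn => hzp k hk (hkn.trans hnd)) (fun k hk hkn => hzm k hk (hkn.trans hnd))
  have hP : IsUnit (Rprod zp zm n) :=
    (isUnit_iff_isUnit_det _).mpr (left_ne_zero_of_mul hneg.ne).isUnit
  obtain ⟨Ht, hHt, hH⟩ := exists_posDef_Hmat_eq_inv_smul hneg
  rw [← ofReal_re_SCD d C (n - 1), ← ofReal_re_SCD d C n]
  refine ⟨hP, (Rprod_mul_eq_iff_eq_Hmat hP _).mpr rfl,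
    fun H' => (Rprod_mul_eq_iff_eq_Hmat hP H').mp, Hmat_isSymm hP, det_Hmat hP,
    ⟨Ht, hHt, isHermitian_iff_isSymm.mp hHt.isHermitian, fun i j => by simp [hH]⟩, ?_⟩
  rw [hH, posDef_smul_iff hHt, inv_pos]
  norm_cast

end
end

section
/- Let 0 ≤ n ≤ d and suppose D_n(𝒞) ≠ 0. Then p_n^+(k) + conj(q_n^+(k)) = p_n^-(k) − conj(q_n^-(k)) for every k with −(d+r−1)/2 ≤ k ≤ (d−r+1)/2 + n − 1. -/
/-
Let `S = diag(1, -1, -1, 1)` act by signs on the four blocks. It commutes with `𝔈₀`, fixes `χ`, and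
anticommutes with `𝔈ₙ^♯` and `𝔍`, so it carries the equation for `Φ_n^-` to the one for `Φ_n^+`.
Once `𝔈₀ + 𝔈ₙ^♯` is known to be injective, `Φ_n^+ = S Φ_n^-`, hence `Ψ_n^+ = S Ψ_n^-`; reading off
the first two blocks, `p_n^+ = p_n^-` and `q_n^+ = -q_n^-`.

Injectivity is where `D_n ≠ 0` enters. The kernel equations split into two systems
`A s + Aᴴ Q t = 0`, `Aᴴ t + A P s = 0`, where `A = 𝔢₀` is a lower triangular Toeplitz matrix of
bandwidth `d` and `P`, `Q` truncate to two windows of `n` consecutive indices lying `d` apart.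
Triangularity turns the rows of these equations inside the windows into the Schur–Cohn system
for `(P s, Q t)`. Hence `P s = Q t = 0`, and then `A s = Aᴴ t = 0` gives `s = t = 0`.
-/

open Complex Matrix

noncomputable section

/-- The `2d × 2d` lower-triangular Toeplitz matrix `𝔢₀(𝒞)` with `(j,k)`-entry
`C_{−L+r(j−k)}` when `0 ≤ j−k ≤ d` and `0` otherwise. -/
def e0mat (d : ℕ) (C : ℤ → ℂ) : Matrix (Fin (2 * d)) (Fin (2 * d)) ℂ :=
  Matrix.of fun j k =>
    if (k : ℕ) ≤ (j : ℕ) ∧ (j : ℕ) - (k : ℕ) ≤ d then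
      C (-(Lv d) + rv d * ((j : ℕ) - (k : ℕ) : ℕ)) else 0

/-- The `2d × 2d` matrix `𝔢_{1,n}(𝒞)` whose only nonzero entries are the
`(m+j, d+m)`-entries (1-based), equal to `C_{L−rj}`, for `1 ≤ m ≤ n`, `0 ≤ j ≤ d`. -/
def e1mat (d n : ℕ) (C : ℤ → ℂ) : Matrix (Fin (2 * d)) (Fin (2 * d)) ℂ :=
  Matrix.of fun j k =>
    if d ≤ (k : ℕ) ∧ (k : ℕ) + 1 ≤ d + n ∧ (k : ℕ) ≤ (j : ℕ) + d ∧ (j : ℕ) ≤ (k : ℕ) then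
      C (Lv d - rv d * ((j : ℤ) - (k : ℤ) + d)) else 0

/-- The `2d × 2d` matrix `𝔢_{2,n}(𝒞)` whose only nonzero entries are the
`(d−n+m+j, 2d−n+m)`-entries (1-based), equal to `C_{L−rj}`, for `1 ≤ m ≤ n`, `0 ≤ j ≤ d`. -/
def e2mat (d n : ℕ) (C : ℤ → ℂ) : Matrix (Fin (2 * d)) (Fin (2 * d)) ℂ :=
  Matrix.of fun j k =>
    if 2 * d ≤ (k : ℕ) + n ∧ (k : ℕ) ≤ (j : ℕ) + d ∧ (j : ℕ) ≤ (k : ℕ) then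
      C (Lv d - rv d * ((j : ℤ) - (k : ℤ) + d)) else 0

/-- The `2d × 2d` anti-diagonal matrix `J_{2d}`. -/
def Jmat (d : ℕ) : Matrix (Fin (2 * d)) (Fin (2 * d)) ℂ :=
  Matrix.of fun j k => if (j : ℕ) + (k : ℕ) + 1 = 2 * d then 1 else 0

/-- The `8d × 8d` matrix `𝔈₀(𝒞) = blockdiag(𝔢₀, 𝔢₀, ᵗconj(𝔢₀), ᵗconj(𝔢₀))`, indexed by
`Fin 4 × Fin (2d)` (the first coordinate is the block index). -/
def bigE0 (d : ℕ) (C : ℤ → ℂ) :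
    Matrix (Fin 4 × Fin (2 * d)) (Fin 4 × Fin (2 * d)) ℂ :=
  Matrix.of fun p q =>
    if p.1 = q.1 then
      (if (p.1 : ℕ) ≤ 1 then e0mat d C p.2 q.2 else (e0mat d C)ᴴ p.2 q.2)
    else 0

/-- The `8d × 8d` matrix `𝔈ₙ^♯(𝒞)` with `(1,3)`-block `conj(𝔢_{2,n})`, `(2,4)`-block
`conj(𝔢_{1,n})`, `(3,1)`-block `J_{2d}·𝔢_{1,n}·J_{2d}`, `(4,2)`-block `J_{2d}·𝔢_{2,n}·J_{2d}`,
and all other blocks zero. -/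
def bigEsharp (d n : ℕ) (C : ℤ → ℂ) :
    Matrix (Fin 4 × Fin (2 * d)) (Fin 4 × Fin (2 * d)) ℂ :=
  Matrix.of fun p q =>
    if p.1 = 0 ∧ q.1 = 2 then ((e2mat d n C).map (starRingEnd ℂ)) p.2 q.2
    else if p.1 = 1 ∧ q.1 = 3 then ((e1mat d n C).map (starRingEnd ℂ)) p.2 q.2
    else if p.1 = 2 ∧ q.1 = 0 then (Jmat d * e1mat d n C * Jmat d) p.2 q.2
    else if p.1 = 3 ∧ q.1 = 1 then (Jmat d * e2mat d n C * Jmat d) p.2 q.2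
    else 0

/-- The vector `χ ∈ ℂ^{8d}` with first and last entries `1` and all other entries `0`. -/
def chiVec (d : ℕ) : Fin 4 × Fin (2 * d) → ℂ := fun p =>
  if (p.1 = 0 ∧ (p.2 : ℕ) = 0) ∨ (p.1 = 3 ∧ (p.2 : ℕ) + 1 = 2 * d) then 1 else 0

/-- The `8d × 8d` matrix `𝔍 = [[0, I_{4d}],[I_{4d}, 0]]` (swapping blocks `0 ↔ 2`, `1 ↔ 3`). -/
def bigJ (d : ℕ) : Matrix (Fin 4 × Fin (2 * d)) (Fin 4 × Fin (2 * d)) ℂ :=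
  Matrix.of fun p q => if ((p.1 : ℕ) + 2) % 4 = (q.1 : ℕ) ∧ p.2 = q.2 then 1 else 0

/-- `p_n^±(k)`: the `(k + (d+r+1)/2)`-th entry (1-based) of a vector `Ψ ∈ ℂ^{8d}`,
lying in the first block of `2d` entries. -/
def pEnt (d : ℕ) (Ψ : Fin 4 × Fin (2 * d) → ℂ) (k : ℤ) : ℂ :=
  if h : ((k + ((d : ℤ) + rv d - 1) / 2).toNat) < 2 * d then
    Ψ (0, ⟨(k + ((d : ℤ) + rv d - 1) / 2).toNat, h⟩) else 0

/-- `q_n^±(k)`: the `(2d + (3d−r+1)/2 − k)`-th entry (1-based) of a vector `Ψ ∈ ℂ^{8d}`,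
lying in the second block of `2d` entries. -/
def qEnt (d : ℕ) (Ψ : Fin 4 × Fin (2 * d) → ℂ) (k : ℤ) : ℂ :=
  if h : (((3 * (d : ℤ) - rv d - 1) / 2 - k).toNat) < 2 * d then
    Ψ (1, ⟨((3 * (d : ℤ) - rv d - 1) / 2 - k).toNat, h⟩) else 0

section Triangular

theorem mulVec_apply_congr {m n R : Type*} [Fintype n] [NonUnitalNonAssocSemiring R]
    {M : Matrix m n R} {i : m} {v w : n → R} (h : ∀ j, M i j = 0 ∨ v j = w j) :
    (M *ᵥ v) i = (M *ᵥ w) i := by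
  simp only [Matrix.mulVec, dotProduct]
  refine Finset.sum_congr rfl fun j _ => ?_
  rcases h j with h | h
  · rw [h, zero_mul, zero_mul]
  · rw [h]

variable {ι α R : Type*} [Fintype ι] [LinearOrder α] {b : ι → α} {U V : Set α}

theorem eq_zero_of_mulVec_eq_zero_on_isUpperSet [NonUnitalNonAssocSemiring R] [NoZeroDivisors R]
    {M : Matrix ι ι R} (hb : b.Injective) (hM : M.BlockTriangular b) (hdiag : ∀ i, M i i ≠ 0)
    (hU : IsUpperSet U) {v : ι → R} (h : ∀ i, b i ∈ U → (M *ᵥ v) i = 0) :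
    ∀ i, b i ∈ U → v i = 0 := by
  by_contra! hne
  obtain ⟨i, ⟨hiU, hvi⟩, hmax⟩ :=
    (Set.toFinite {i | b i ∈ U ∧ v i ≠ 0}).exists_maximalFor b _ hne
  have hrow : (M *ᵥ v) i = M i i * v i := by
    simp only [Matrix.mulVec, dotProduct]
    refine Fintype.sum_eq_single i fun j hji => ?_
    rcases lt_or_gt_of_ne (hb.ne hji) with hlt | hgt
    · rw [hM hlt, zero_mul]
    · have hvj : v j = 0 := by
        by_contra hvj
        exact hgt.not_ge (hmax ⟨hU hgt.le hiU, hvj⟩ hgt.le)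
      rw [hvj, mul_zero]
  exact mul_ne_zero (hdiag i) hvi (hrow ▸ h i hiU)

theorem mulVec_add_eq_zero_of_truncation [NonUnitalNonAssocRing R] [NoZeroDivisors R]
    {M : Matrix ι ι R} (hb : b.Injective) (hM : M.BlockTriangular b) (hdiag : ∀ i, M i i ≠ 0)
    (hU : IsUpperSet U) (hV : IsUpperSet V) {v w y : ι → R} (h : M *ᵥ v + y = 0)
    (hy : ∀ i, b i ∈ U → y i = 0) (hwU : ∀ i, b i ∈ U → w i = 0)
    (hwV : ∀ i, b i ∈ V → b i ∉ U → w i = v i) :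
    ∀ i, b i ∈ V → (M *ᵥ w + y) i = 0 := by
  have hvU : ∀ i, b i ∈ U → v i = 0 :=
    eq_zero_of_mulVec_eq_zero_on_isUpperSet hb hM hdiag hU fun i hi => by
      simpa [hy i hi] using congrFun h i
  intro i hi
  have hrow : (M *ᵥ w) i = (M *ᵥ v) i := by
    refine mulVec_apply_congr fun j => ?_
    rcases lt_or_ge (b j) (b i) with hlt | hge
    · exact .inl (hM hlt)
    · by_cases hj : b j ∈ U
      · exact .inr ((hwU j hj).trans (hvU j hj).symm)
      · exact .inr (hwV j (hV hge hi) hj)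
  rw [Pi.add_apply, hrow]
  exact congrFun h i

end Triangular

section Window

variable {N o n : ℕ} {R : Type*}

/-- The inclusion of the window `[o, o + n)` of `n` consecutive indices into `Fin N`. -/
def windowEmb (h : o + n ≤ N) (k : Fin n) : Fin N := (k.natAdd o).castLE h

@[simp]
theorem val_windowEmb (h : o + n ≤ N) (k : Fin n) : (windowEmb h k : ℕ) = o + k := rfl

theorem windowEmb_injective (h : o + n ≤ N) : (windowEmb h).Injective :=
  (Fin.castLE_injective h).comp (Fin.natAdd_injective n o)

theorem mem_range_windowEmb (h : o + n ≤ N) {j : Fin N} :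
    j ∈ Set.range (windowEmb h) ↔ o ≤ (j : ℕ) ∧ (j : ℕ) < o + n := by
  refine ⟨?_, fun ⟨hoj, _⟩ => ⟨⟨j - o, by omega⟩, Fin.ext ?_⟩⟩
  · rintro ⟨k, rfl⟩
    simp
  · simp [hoj]

/-- The coordinate projection of `R ^ N` onto the window `[o, o + n)`, as an `N × N` matrix. -/
def windowProj (N o n : ℕ) [Zero R] [One R] : Matrix (Fin N) (Fin N) R :=
  Matrix.diagonal fun j => if o ≤ (j : ℕ) ∧ (j : ℕ) < o + n then 1 else 0

theorem windowProj_mulVec_apply [NonAssocSemiring R] (v : Fin N → R) (j : Fin N) :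
    (windowProj N o n *ᵥ v) j = if o ≤ (j : ℕ) ∧ (j : ℕ) < o + n then v j else 0 := by
  rw [windowProj, Matrix.mulVec_diagonal, ite_mul, one_mul, zero_mul]

theorem mul_windowProj_apply [NonAssocSemiring R] (M : Matrix (Fin N) (Fin N) R) (i j : Fin N) :
    (M * windowProj (R := R) N o n) i j = if o ≤ (j : ℕ) ∧ (j : ℕ) < o + n then M i j else 0 := by
  rw [windowProj, Matrix.mul_diagonal, mul_ite, mul_one, mul_zero]

theorem windowProj_map {S : Type*} [NonAssocSemiring R] [NonAssocSemiring S] (f : R →+* S) :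
    (windowProj N o n).map f = windowProj N o n := by
  rw [windowProj, Matrix.diagonal_map (map_zero f)]
  simp only [apply_ite f, map_one, map_zero, windowProj]

theorem windowProj_submatrix_rev [Zero R] [One R] (h : o + n ≤ N) :
    (windowProj N o n : Matrix _ _ R).submatrix Fin.rev Fin.rev = windowProj N (N - (o + n)) n := by
  rw [windowProj, Matrix.submatrix_diagonal _ _ Fin.rev_injective, windowProj]
  congr 1
  funext j
  simp only [Function.comp_apply, Fin.val_rev]
  congr 1
  rw [eq_iff_iff]
  omega

theorem mulVec_windowProj [NonAssocSemiring R] (M : Matrix (Fin N) (Fin N) R) (h : o + n ≤ N)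
    (v : Fin N → R) :
    M *ᵥ (windowProj N o n *ᵥ v) = M.submatrix id (windowEmb h) *ᵥ (v ∘ windowEmb h) := by
  funext i
  refine (Fintype.sum_of_injective (windowEmb h) (windowEmb_injective h) _ _ (fun j hj => ?_)
    fun k => ?_).symm
  · rw [windowProj_mulVec_apply, if_neg (mt (mem_range_windowEmb h).2 hj), mul_zero]
  · rw [windowProj_mulVec_apply, if_pos ((mem_range_windowEmb h).1 ⟨k, rfl⟩)]
    rfl

end Window

section Toeplitz

variable {R : Type*} {N d n o : ℕ}

/-- The lower triangular banded Toeplitz matrix with `a d` on the diagonal and `a (d - m)` on the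
`m`-th subdiagonal for `m ≤ d`. For `a` the coefficients of `f`, it multiplies power series modulo
`T ^ N` by the reciprocal polynomial `T ^ d * f (1 / T)`. -/
def bandedToeplitz [Zero R] (N d : ℕ) (a : ℕ → R) : Matrix (Fin N) (Fin N) R :=
  Matrix.of fun i j => if (j : ℕ) ≤ i ∧ (i : ℕ) ≤ j + d then a (d + j - i) else 0

theorem bandedToeplitz_apply [Zero R] (a : ℕ → R) (i j : Fin N) :
    bandedToeplitz N d a i j = if (j : ℕ) ≤ i ∧ (i : ℕ) ≤ j + d then a (d + j - i) else 0 := rfl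

theorem bandedToeplitz_apply_self [Zero R] (a : ℕ → R) (i : Fin N) :
    bandedToeplitz N d a i i = a d := by
  simp [bandedToeplitz_apply]

theorem bandedToeplitz_blockTriangular [Zero R] (a : ℕ → R) :
    (bandedToeplitz N d a).BlockTriangular OrderDual.toDual := fun i j hij => by
  have hij : (i : ℕ) < j := hij
  rw [bandedToeplitz_apply, if_neg (by omega)]

theorem bandedToeplitz_conjTranspose_blockTriangular [AddMonoid R] [StarAddMonoid R]
    (a : ℕ → R) : (bandedToeplitz N d a)ᴴ.BlockTriangular id := fun i j hji => by
  rw [Matrix.conjTranspose_apply, bandedToeplitz_blockTriangular a hji, star_zero]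

theorem bandedToeplitz_conjTranspose_apply_self_ne_zero [AddMonoid R] [StarAddMonoid R]
    {a : ℕ → R} (ha : a d ≠ 0) (i : Fin N) : (bandedToeplitz N d a)ᴴ i i ≠ 0 := by
  rwa [Matrix.conjTranspose_apply, bandedToeplitz_apply_self, star_ne_zero]

theorem bandedToeplitz_eq_zero_of_add_lt [Zero R] (a : ℕ → R) {i j : Fin N}
    (h : (j : ℕ) + d < i) : bandedToeplitz N d a i j = 0 := by
  rw [bandedToeplitz_apply, if_neg (by omega)]

theorem bandedToeplitz_submatrix_rev [Zero R] (a : ℕ → R) :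
    (bandedToeplitz N d a).submatrix Fin.rev Fin.rev = (bandedToeplitz N d a)ᵀ := by
  ext i j
  simp only [Matrix.submatrix_apply, Matrix.transpose_apply, bandedToeplitz_apply, Fin.val_rev]
  refine ite_congr (by rw [eq_iff_iff]; omega) (fun _ => ?_) fun _ => rfl
  congr 1
  omega

section Truncation

variable [Ring R] [NoZeroDivisors R] {a : ℕ → R} {s t : Fin N → R}

theorem eq_zero_of_bandedToeplitz_mulVec_eq_zero (ha : a d ≠ 0)
    (h : bandedToeplitz N d a *ᵥ s = 0) : s = 0 :=
  funext fun i => eq_zero_of_mulVec_eq_zero_on_isUpperSet OrderDual.toDual.injective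
    (bandedToeplitz_blockTriangular a) (fun i => (bandedToeplitz_apply_self a i).trans_ne ha)
    isUpperSet_univ (fun i _ => congrFun h i) i (Set.mem_univ _)

variable [StarRing R]

theorem windowed_add_eq_zero_of_lt (ha : a d ≠ 0)
    (hst : bandedToeplitz N d a *ᵥ s
      + (bandedToeplitz N d a)ᴴ *ᵥ (windowProj N (o + d) n *ᵥ t) = 0)
    (i : Fin N) (hi : (i : ℕ) < o + n) :
    (bandedToeplitz N d a *ᵥ (windowProj N o n *ᵥ s)
      + (bandedToeplitz N d a)ᴴ *ᵥ (windowProj N (o + d) n *ᵥ t)) i = 0 := by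
  have hlower (m : ℕ) := ((isLowerSet_Iio m).preimage (Fin.val_strictMono (n := N)).monotone).toDual
  refine mulVec_add_eq_zero_of_truncation OrderDual.toDual.injective
    (bandedToeplitz_blockTriangular a) (fun i => (bandedToeplitz_apply_self a i).trans_ne ha)
    (hlower o) (hlower (o + n)) hst (fun i (hi : (i : ℕ) < o) => ?_)
    (fun i (hi : (i : ℕ) < o) => ?_)
    (fun i (hi : (i : ℕ) < o + n) (hi' : ¬(i : ℕ) < o) => ?_) i hi
  · rw [mulVec_apply_congr (w := 0), Matrix.mulVec_zero, Pi.zero_apply]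
    intro j
    rcases lt_or_ge (j : ℕ) (o + d) with hj | hj
    · exact .inr (by rw [windowProj_mulVec_apply, if_neg (by omega), Pi.zero_apply])
    · refine .inl ?_
      rw [Matrix.conjTranspose_apply, bandedToeplitz_eq_zero_of_add_lt a (by omega), star_zero]
  · rw [windowProj_mulVec_apply, if_neg (by omega)]
  · rw [windowProj_mulVec_apply, if_pos ⟨not_lt.1 hi', hi⟩]

theorem windowed_add_eq_zero_of_ge (ha : a d ≠ 0)
    (hst : (bandedToeplitz N d a)ᴴ *ᵥ t
      + bandedToeplitz N d a *ᵥ (windowProj N o n *ᵥ s) = 0)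
    (i : Fin N) (hi : o + d ≤ (i : ℕ)) :
    (bandedToeplitz N d a *ᵥ (windowProj N o n *ᵥ s)
      + (bandedToeplitz N d a)ᴴ *ᵥ (windowProj N (o + d) n *ᵥ t)) i = 0 := by
  have hupper (m : ℕ) := (isUpperSet_Ici m).preimage (Fin.val_strictMono (n := N)).monotone
  rw [add_comm]
  refine mulVec_add_eq_zero_of_truncation Function.injective_id
    (bandedToeplitz_conjTranspose_blockTriangular a)
    (bandedToeplitz_conjTranspose_apply_self_ne_zero ha)
    (hupper (o + d + n)) (hupper (o + d)) hst (fun i (hi : o + d + n ≤ (i : ℕ)) => ?_)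
    (fun i (hi : o + d + n ≤ (i : ℕ)) => ?_)
    (fun i (hi : o + d ≤ (i : ℕ)) (hi' : ¬o + d + n ≤ (i : ℕ)) => ?_) i hi
  · rw [mulVec_apply_congr (w := 0), Matrix.mulVec_zero, Pi.zero_apply]
    intro j
    rcases lt_or_ge (j : ℕ) (o + n) with hj | hj
    · exact .inl (bandedToeplitz_eq_zero_of_add_lt a (by omega))
    · exact .inr (by rw [windowProj_mulVec_apply, if_neg (by omega), Pi.zero_apply])
  · rw [windowProj_mulVec_apply, if_neg (by omega)]
  · rw [windowProj_mulVec_apply, if_pos ⟨hi, not_le.1 hi'⟩]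

theorem eq_zero_of_bandedToeplitz_conjTranspose_mulVec_eq_zero (ha : a d ≠ 0)
    (h : (bandedToeplitz N d a)ᴴ *ᵥ t = 0) : t = 0 :=
  funext fun i => eq_zero_of_mulVec_eq_zero_on_isUpperSet Function.injective_id
    (bandedToeplitz_conjTranspose_blockTriangular a)
    (bandedToeplitz_conjTranspose_apply_self_ne_zero ha)
    isUpperSet_univ (fun i _ => congrFun h i) i (Set.mem_univ _)

end Truncation

theorem bandedToeplitz_submatrix_windowEmb (a : ℕ → ℂ) (hn : n ≤ d + 1) (h : o + n ≤ N) :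
    (bandedToeplitz N d a).submatrix (windowEmb h) (windowEmb h) = (SCM a d n)ᵀ := by
  ext i j
  simp only [Matrix.submatrix_apply, bandedToeplitz_apply, val_windowEmb, Matrix.transpose_apply,
    SCM, Matrix.of_apply]
  refine ite_congr (by rw [eq_iff_iff]; omega) (fun _ => ?_) fun _ => rfl
  congr 1
  omega

theorem bandedToeplitz_submatrix_windowEmb_add (a : ℕ → ℂ) (hn : n ≤ d + 1) (h : o + n ≤ N)
    (h' : o + d + n ≤ N) :
    (bandedToeplitz N d a).submatrix (windowEmb h') (windowEmb h) = SCN a n := by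
  ext i j
  simp only [Matrix.submatrix_apply, bandedToeplitz_apply, val_windowEmb, SCN, Matrix.of_apply]
  refine ite_congr (by rw [eq_iff_iff]; omega) (fun _ => ?_) fun _ => rfl
  congr 1
  omega

theorem SCL_one_eq_fromBlocks_bandedToeplitz (a : ℕ → ℂ) (hn : n ≤ d + 1) (h : o + n ≤ N)
    (h' : o + d + n ≤ N) :
    SCL a d n 1 = Matrix.fromBlocks
      ((bandedToeplitz N d a).submatrix (windowEmb h) (windowEmb h))
      ((bandedToeplitz N d a)ᴴ.submatrix (windowEmb h) (windowEmb h'))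
      ((bandedToeplitz N d a).submatrix (windowEmb h') (windowEmb h))
      ((bandedToeplitz N d a)ᴴ.submatrix (windowEmb h') (windowEmb h')) := by
  simp only [← Matrix.conjTranspose_submatrix, bandedToeplitz_submatrix_windowEmb _ hn,
    bandedToeplitz_submatrix_windowEmb_add _ hn h h', SCL, one_smul]
  rfl

theorem SCL_one_mulVec_windows (a : ℕ → ℂ) (hn : n ≤ d + 1) (h : o + n ≤ N)
    (h' : o + d + n ≤ N) (s t : Fin N → ℂ) {g : Fin N → ℂ}
    (hg : bandedToeplitz N d a *ᵥ (windowProj N o n *ᵥ s)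
      + (bandedToeplitz N d a)ᴴ *ᵥ (windowProj N (o + d) n *ᵥ t) = g) :
    SCL a d n 1 *ᵥ Sum.elim (s ∘ windowEmb h) (t ∘ windowEmb h')
      = Sum.elim (g ∘ windowEmb h) (g ∘ windowEmb h') := by
  rw [SCL_one_eq_fromBlocks_bandedToeplitz a hn h h', Matrix.fromBlocks_mulVec, ← hg,
    mulVec_windowProj _ h, mulVec_windowProj _ h']
  rfl

theorem eq_zero_of_windowed_bandedToeplitz_system {a : ℕ → ℂ} {s t : Fin N → ℂ} (ha : a d ≠ 0)
    (hD : (SCL a d n 1).det ≠ 0) (hn : n ≤ d + 1) (h' : o + d + n ≤ N)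
    (hs : bandedToeplitz N d a *ᵥ s
      + (bandedToeplitz N d a)ᴴ *ᵥ (windowProj N (o + d) n *ᵥ t) = 0)
    (ht : (bandedToeplitz N d a)ᴴ *ᵥ t
      + bandedToeplitz N d a *ᵥ (windowProj N o n *ᵥ s) = 0) :
    s = 0 ∧ t = 0 := by
  have h : o + n ≤ N := by omega
  have hker : SCL a d n 1 *ᵥ Sum.elim (s ∘ windowEmb h) (t ∘ windowEmb h') = 0 := by
    rw [SCL_one_mulVec_windows a hn h h' s t rfl]
    funext k
    rcases k with k | k
    · exact windowed_add_eq_zero_of_lt ha hs _ (by simp)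
    · exact windowed_add_eq_zero_of_ge ha ht _ (by simp)
  have hst := Matrix.eq_zero_of_mulVec_eq_zero hD hker
  have hs_window : s ∘ windowEmb h = 0 := funext fun k => congrFun hst (.inl k)
  have ht_window : t ∘ windowEmb h' = 0 := funext fun k => congrFun hst (.inr k)
  rw [mulVec_windowProj _ h', ht_window, Matrix.mulVec_zero, add_zero] at hs
  rw [mulVec_windowProj _ h, hs_window, Matrix.mulVec_zero, add_zero] at ht
  exact ⟨eq_zero_of_bandedToeplitz_mulVec_eq_zero ha hs,
    eq_zero_of_bandedToeplitz_conjTranspose_mulVec_eq_zero ha ht⟩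

end Toeplitz

section Blocks

theorem curry_mulVec {κ l m n R : Type*} [Fintype l] [Fintype n] [NonUnitalNonAssocSemiring R]
    (M : Matrix (κ × m) (l × n) R) (v : l × n → R) (b : κ) :
    Function.curry (M *ᵥ v) b
      = ∑ c, M.submatrix (Prod.mk b) (Prod.mk c) *ᵥ Function.curry v c := by
  funext i
  rw [Finset.sum_apply]
  exact Fintype.sum_prod_type _

variable (d n : ℕ) (C : ℤ → ℂ)

theorem rv_mul_natCast : rv d * (d : ℤ) = 2 * Lv d := by
  unfold rv Lv
  split_ifs with h
  · obtain ⟨m, rfl⟩ := h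
    push_cast
    omega
  · rfl

theorem coeffC_self : coeffC d C d = C (-Lv d) := by
  rw [coeffC, rv_mul_natCast]
  congr 1
  ring

theorem e0mat_eq_bandedToeplitz : e0mat d C = bandedToeplitz (2 * d) d (coeffC d C) := by
  ext i j
  rw [bandedToeplitz_apply, e0mat, Matrix.of_apply]
  refine ite_congr (by rw [eq_iff_iff]; omega) (fun h => ?_) fun _ => rfl
  rw [coeffC, Nat.cast_sub (by omega), Nat.cast_sub (by omega)]
  congr 1
  push_cast
  linear_combination rv_mul_natCast d

theorem e1mat_eq : e1mat d n C = (e0mat d C)ᵀ * windowProj (2 * d) d n := by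
  ext i j
  rw [mul_windowProj_apply, Matrix.transpose_apply, e0mat_eq_bandedToeplitz, bandedToeplitz_apply,
    ← ite_and, e1mat, Matrix.of_apply]
  refine ite_congr (by rw [eq_iff_iff]; omega) (fun h => ?_) fun _ => rfl
  rw [coeffC, Nat.cast_sub (by omega)]
  congr 2
  push_cast
  ring

theorem e2mat_eq : e2mat d n C = (e0mat d C)ᵀ * windowProj (2 * d) (2 * d - n) n := by
  ext i j
  rw [mul_windowProj_apply, Matrix.transpose_apply, e0mat_eq_bandedToeplitz, bandedToeplitz_apply,
    ← ite_and, e2mat, Matrix.of_apply]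
  refine ite_congr (by rw [eq_iff_iff]; omega) (fun h => ?_) fun _ => rfl
  rw [coeffC, Nat.cast_sub (by omega)]
  congr 2
  push_cast
  ring

theorem Jmat_mul_mul_Jmat (M : Matrix (Fin (2 * d)) (Fin (2 * d)) ℂ) :
    Jmat d * M * Jmat d = M.submatrix Fin.rev Fin.rev := by
  have hJ : Jmat d = (Fin.revPerm.toPEquiv.toMatrix : Matrix _ _ ℂ) := by
    ext i j
    rw [Jmat, Matrix.of_apply, PEquiv.toMatrix_apply]
    congr 1
    rw [Equiv.toPEquiv_apply, Option.mem_some_iff, Fin.revPerm_apply, Fin.ext_iff, Fin.val_rev,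
      eq_iff_iff]
    omega
  rw [hJ, PEquiv.toMatrix_toPEquiv_mul, PEquiv.mul_toMatrix_toPEquiv, Fin.revPerm_symm]
  rfl

variable {d n}

theorem e1mat_map_conj :
    (e1mat d n C).map (starRingEnd ℂ) = (e0mat d C)ᴴ * windowProj (2 * d) d n := by
  rw [e1mat_eq, Matrix.map_mul, windowProj_map]
  rfl

theorem e2mat_map_conj :
    (e2mat d n C).map (starRingEnd ℂ) = (e0mat d C)ᴴ * windowProj (2 * d) (2 * d - n) n := by
  rw [e2mat_eq, Matrix.map_mul, windowProj_map]
  rfl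

theorem transpose_e0mat_submatrix_rev :
    (e0mat d C)ᵀ.submatrix Fin.rev Fin.rev = e0mat d C := by
  rw [e0mat_eq_bandedToeplitz, ← Matrix.transpose_submatrix, bandedToeplitz_submatrix_rev,
    Matrix.transpose_transpose]

theorem Jmat_mul_e1mat_mul_Jmat (hn : n ≤ d) :
    Jmat d * e1mat d n C * Jmat d = e0mat d C * windowProj (2 * d) (d - n) n := by
  rw [Jmat_mul_mul_Jmat, e1mat_eq, Matrix.submatrix_mul _ _ _ _ _ Fin.rev_bijective,
    transpose_e0mat_submatrix_rev, windowProj_submatrix_rev (by omega)]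
  congr 2
  omega

theorem Jmat_mul_e2mat_mul_Jmat (hn : n ≤ 2 * d) :
    Jmat d * e2mat d n C * Jmat d = e0mat d C * windowProj (2 * d) 0 n := by
  rw [Jmat_mul_mul_Jmat, e2mat_eq, Matrix.submatrix_mul _ _ _ _ _ Fin.rev_bijective,
    transpose_e0mat_submatrix_rev, windowProj_submatrix_rev (by omega)]
  congr 2
  omega

theorem curry_bigE0_mulVec (Φ : Fin 4 × Fin (2 * d) → ℂ) (b : Fin 4) :
    Function.curry (bigE0 d C *ᵥ Φ) b
      = (if (b : ℕ) ≤ 1 then e0mat d C else (e0mat d C)ᴴ) *ᵥ Function.curry Φ b := by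
  rw [curry_mulVec, Finset.sum_eq_single b]
  · congr 1
    ext i j
    simp only [bigE0, Matrix.submatrix_apply, Matrix.of_apply, if_true]
    split_ifs <;> rfl
  · intro c _ hc
    rw [show (bigE0 d C).submatrix (Prod.mk b) (Prod.mk c) = 0 from
      Matrix.ext fun _ _ => if_neg hc.symm, Matrix.zero_mulVec]
  · simp

theorem curry_bigEsharp_mulVec (Φ : Fin 4 × Fin (2 * d) → ℂ) :
    Function.curry (bigEsharp d n C *ᵥ Φ) =
      ![(e2mat d n C).map (starRingEnd ℂ) *ᵥ Function.curry Φ 2,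
        (e1mat d n C).map (starRingEnd ℂ) *ᵥ Function.curry Φ 3,
        (Jmat d * e1mat d n C * Jmat d) *ᵥ Function.curry Φ 0,
        (Jmat d * e2mat d n C * Jmat d) *ᵥ Function.curry Φ 1] := by
  funext b
  rw [curry_mulVec, Fin.sum_univ_four]
  fin_cases b <;> funext i <;>
    simp [bigEsharp, Matrix.mulVec, dotProduct]

theorem SCL_coeffC_one_det_ne_zero (hD : SCD d C n ≠ 0) : (SCL (coeffC d C) d n 1).det ≠ 0 := by
  rw [SCD] at hD
  split_ifs at hD with hn
  · subst hn
    rw [Matrix.det_isEmpty]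
    exact one_ne_zero
  · exact hD

theorem bigE0_add_bigEsharp_mulVec_injective (hC : C (-Lv d) ≠ 0) (hn : n ≤ d)
    (hD : SCD d C n ≠ 0) : (bigE0 d C + bigEsharp d n C).mulVec.Injective := by
  rw [← Matrix.coe_mulVecLin, injective_iff_map_eq_zero]
  intro Φ hΦ
  have hrow (b : Fin 4) : Function.curry (bigE0 d C *ᵥ Φ) b
      + Function.curry (bigEsharp d n C *ᵥ Φ) b = 0 := by
    rw [Matrix.mulVecLin_apply, Matrix.add_mulVec] at hΦ
    exact congrArg (Function.curry · b) hΦ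
  have ha : coeffC d C d ≠ 0 := by rwa [coeffC_self]
  simp only [curry_bigE0_mulVec, curry_bigEsharp_mulVec, e1mat_map_conj, e2mat_map_conj,
    Jmat_mul_e1mat_mul_Jmat C hn, Jmat_mul_e2mat_mul_Jmat C (hn.trans (by omega : d ≤ 2 * d)),
    ← Matrix.mulVec_mulVec, e0mat_eq_bandedToeplitz] at hrow
  have hdet := SCL_coeffC_one_det_ne_zero C hD
  have hwindow : d - n + d = 2 * d - n := by omega
  obtain ⟨h0, h2⟩ := eq_zero_of_windowed_bandedToeplitz_system ha hdet
    (by omega : n ≤ d + 1) (by omega : d - n + d + n ≤ 2 * d)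
    (by rw [hwindow]; exact hrow 0) (hrow 2)
  obtain ⟨h1, h3⟩ := eq_zero_of_windowed_bandedToeplitz_system ha hdet
    (by omega : n ≤ d + 1) (by omega : 0 + d + n ≤ 2 * d)
    (by rw [zero_add]; exact hrow 1) (hrow 3)
  funext ⟨b, i⟩
  fin_cases b
  exacts [congrFun h0 i, congrFun h1 i, congrFun h2 i, congrFun h3 i]

end Blocks

section Symmetry

/-- The sign symmetry `diag(1, -1, -1, 1)` of the four blocks, which exchanges the equations for
`Φ_n^+` and `Φ_n^-`. -/
def blockSign (d : ℕ) : Matrix (Fin 4 × Fin (2 * d)) (Fin 4 × Fin (2 * d)) ℂ :=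
  Matrix.diagonal fun p => ![1, -1, -1, 1] p.1

variable (d n : ℕ) (C : ℤ → ℂ)

theorem blockSign_mulVec_apply (v : Fin 4 × Fin (2 * d) → ℂ) (p : Fin 4 × Fin (2 * d)) :
    (blockSign d *ᵥ v) p = ![1, -1, -1, 1] p.1 * v p :=
  Matrix.mulVec_diagonal ..

theorem commute_blockSign_bigE0 : Commute (blockSign d) (bigE0 d C) := by
  ext p q
  rw [blockSign, Matrix.diagonal_mul, Matrix.mul_diagonal, bigE0, Matrix.of_apply]
  split_ifs with h
  · rw [h, mul_comm]
  · rw [h, mul_comm]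
  · rw [mul_zero, zero_mul]

theorem blockSign_mul_bigEsharp :
    blockSign d * bigEsharp d n C = -(bigEsharp d n C * blockSign d) := by
  ext ⟨b, i⟩ ⟨c, j⟩
  rw [Matrix.neg_apply, blockSign, Matrix.diagonal_mul, Matrix.mul_diagonal, bigEsharp,
    Matrix.of_apply]
  fin_cases b <;> fin_cases c <;> simp

theorem blockSign_mul_bigJ : blockSign d * bigJ d = -(bigJ d * blockSign d) := by
  ext ⟨b, i⟩ ⟨c, j⟩
  rw [Matrix.neg_apply, blockSign, Matrix.diagonal_mul, Matrix.mul_diagonal, bigJ,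
    Matrix.of_apply]
  split_ifs with h
  · obtain ⟨hbc, -⟩ := h
    fin_cases b <;> fin_cases c <;> simp at hbc ⊢
  · rw [mul_zero, zero_mul, neg_zero]

theorem blockSign_mulVec_chiVec : blockSign d *ᵥ chiVec d = chiVec d := by
  funext ⟨b, i⟩
  rw [blockSign_mulVec_apply, chiVec]
  fin_cases b <;> simp

variable {d n C}

theorem eq_blockSign_mulVec (hinj : (bigE0 d C + bigEsharp d n C).mulVec.Injective)
    {Φp Φm : Fin 4 × Fin (2 * d) → ℂ}
    (hΦp : (bigE0 d C + bigEsharp d n C) *ᵥ Φp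
      = bigE0 d C *ᵥ chiVec d - bigJ d *ᵥ (bigE0 d C *ᵥ chiVec d))
    (hΦm : (bigE0 d C - bigEsharp d n C) *ᵥ Φm
      = bigE0 d C *ᵥ chiVec d + bigJ d *ᵥ (bigE0 d C *ᵥ chiVec d)) :
    Φp = blockSign d *ᵥ Φm := by
  have hconj : (bigE0 d C + bigEsharp d n C) * blockSign d
      = blockSign d * (bigE0 d C - bigEsharp d n C) := by
    rw [add_mul, mul_sub, blockSign_mul_bigEsharp, (commute_blockSign_bigE0 d C).eq, sub_neg_eq_add]
  have hχ : blockSign d *ᵥ (bigE0 d C *ᵥ chiVec d) = bigE0 d C *ᵥ chiVec d := by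
    rw [Matrix.mulVec_mulVec, (commute_blockSign_bigE0 d C).eq, ← Matrix.mulVec_mulVec,
      blockSign_mulVec_chiVec]
  have hJχ : blockSign d *ᵥ (bigJ d *ᵥ (bigE0 d C *ᵥ chiVec d))
      = -(bigJ d *ᵥ (bigE0 d C *ᵥ chiVec d)) := by
    rw [Matrix.mulVec_mulVec, blockSign_mul_bigJ, Matrix.neg_mulVec, ← Matrix.mulVec_mulVec, hχ]
  apply hinj
  calc (bigE0 d C + bigEsharp d n C) *ᵥ Φp
      = blockSign d *ᵥ ((bigE0 d C - bigEsharp d n C) *ᵥ Φm) := by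
        rw [hΦp, hΦm, Matrix.mulVec_add, hχ, hJχ, sub_eq_add_neg]
    _ = (bigE0 d C + bigEsharp d n C) *ᵥ (blockSign d *ᵥ Φm) := by
        rw [Matrix.mulVec_mulVec, Matrix.mulVec_mulVec, hconj]

theorem bigE0_mulVec_blockSign_mulVec_add_chiVec (Φ : Fin 4 × Fin (2 * d) → ℂ) :
    bigE0 d C *ᵥ (blockSign d *ᵥ Φ + chiVec d)
      = blockSign d *ᵥ (bigE0 d C *ᵥ (Φ + chiVec d)) := by
  rw [Matrix.mulVec_mulVec, (commute_blockSign_bigE0 d C).eq, ← Matrix.mulVec_mulVec,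
    Matrix.mulVec_add (blockSign d), blockSign_mulVec_chiVec]

theorem pEnt_blockSign_mulVec (Ψ : Fin 4 × Fin (2 * d) → ℂ) (k : ℤ) :
    pEnt d (blockSign d *ᵥ Ψ) k = pEnt d Ψ k := by
  unfold pEnt
  split_ifs
  · simp [blockSign_mulVec_apply]
  · rfl

theorem qEnt_blockSign_mulVec (Ψ : Fin 4 × Fin (2 * d) → ℂ) (k : ℤ) :
    qEnt d (blockSign d *ᵥ Ψ) k = -qEnt d Ψ k := by
  unfold qEnt
  split_ifs
  · simp [blockSign_mulVec_apply]
  · rw [neg_zero]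

end Symmetry

theorem p_plus_conj_q_plus_eq_p_minus_conj_q_minus_general
    (d : ℕ) (C : ℤ → ℂ) (hC : C (-(Lv d)) ≠ 0) (n : ℕ) (hnd : n ≤ d) (hD : SCD d C n ≠ 0)
    (Φp Φm : Fin 4 × Fin (2 * d) → ℂ)
    (hΦp : (bigE0 d C + bigEsharp d n C).mulVec Φp
      = (bigE0 d C).mulVec (chiVec d) - (bigJ d).mulVec ((bigE0 d C).mulVec (chiVec d)))
    (hΦm : (bigE0 d C - bigEsharp d n C).mulVec Φm
      = (bigE0 d C).mulVec (chiVec d) + (bigJ d).mulVec ((bigE0 d C).mulVec (chiVec d))) :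
    ∀ k : ℤ, -(((d : ℤ) + rv d - 1) / 2) ≤ k → k ≤ (3 * (d : ℤ) - rv d - 1) / 2 →
      pEnt d ((bigE0 d C).mulVec (Φp + chiVec d)) k
          = pEnt d ((bigE0 d C).mulVec (Φm + chiVec d)) k
        ∧ qEnt d ((bigE0 d C).mulVec (Φp + chiVec d)) k
          = -qEnt d ((bigE0 d C).mulVec (Φm + chiVec d)) k := by
  intro k _ _
  have hinj := bigE0_add_bigEsharp_mulVec_injective C hC hnd hD
  rw [eq_blockSign_mulVec hinj hΦp hΦm, bigE0_mulVec_blockSign_mulVec_add_chiVec]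
  exact ⟨pEnt_blockSign_mulVec _ k, qEnt_blockSign_mulVec _ k⟩

/-- Lemma 3.8: `p_n^+(k) + conj(q_n^+(k)) = p_n^-(k) − conj(q_n^-(k))` for
`−(d+r−1)/2 ≤ k ≤ (d−r+1)/2 + n − 1` and `0 ≤ n ≤ d`. -/
theorem p_plus_conj_q_plus_eq_p_minus_conj_q_minus
    (d : ℕ) (hd : 0 < d) (C : ℤ → ℂ) (hC : C (Lv d) * C (-(Lv d)) ≠ 0)
    (n : ℕ) (hnd : n ≤ d) (hD : SCD d C n ≠ 0)
    (Φp Φm : Fin 4 × Fin (2 * d) → ℂ)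
    (hΦp : (bigE0 d C + bigEsharp d n C).mulVec Φp
      = (bigE0 d C).mulVec (chiVec d) - (bigJ d).mulVec ((bigE0 d C).mulVec (chiVec d)))
    (hΦm : (bigE0 d C - bigEsharp d n C).mulVec Φm
      = (bigE0 d C).mulVec (chiVec d) + (bigJ d).mulVec ((bigE0 d C).mulVec (chiVec d))) :
    ∀ k : ℤ, -(((d : ℤ) + rv d - 1) / 2) ≤ k → k ≤ ((d : ℤ) - rv d + 1) / 2 + n - 1 →
      pEnt d ((bigE0 d C).mulVec (Φp + chiVec d)) k
          + (starRingEnd ℂ) (qEnt d ((bigE0 d C).mulVec (Φp + chiVec d)) k)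
        = pEnt d ((bigE0 d C).mulVec (Φm + chiVec d)) k
          - (starRingEnd ℂ) (qEnt d ((bigE0 d C).mulVec (Φm + chiVec d)) k) := by
  intro k hk hk'
  obtain ⟨hp, hq⟩ := p_plus_conj_q_plus_eq_p_minus_conj_q_minus_general d C
    (right_ne_zero_of_mul hC) n hnd hD Φp Φm hΦp hΦm k hk (by omega)
  rw [hp, hq, map_neg, sub_eq_add_neg]

end
end
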